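/- Let φ : R → S be a flat homomorphism of commutative noetherian rings and let M be an R-module. Then Gfd_S(S ⊗_R M) ≤ Gfd_R(M). If moreover φ is faithfully flat, then Gfd_S(S ⊗_R M) = Gfd_R(M); in particular, in this case Gfd_R(M) is finite if and only if Gfd_S(S ⊗_R M) is finite. -/

import Mathlib

/-!
Let `φ : R → S` be a flat homomorphism of commutative noetherian rings and `M` an
`R`-module. Then `Gfd_S(S ⊗_R M) ≤ Gfd_R M`; if moreover `φ` is faithfully flat, then
`Gfd_S(S ⊗_R M) = Gfd_R M`, and in particular the two dimensions are simultaneously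
finite.
-/

universe u

open CategoryTheory TensorProduct

/-- A witness that `G` is a Gorenstein flat `R`-module: an exact complex `F` of flat
`R`-modules (with differentials `d i : F (i+1) →ₗ[R] F i`) such that `E ⊗_R F` is exact
for every injective `R`-module `E`, together with an isomorphism `G ≅ im (F 0 → F (-1))`. -/
structure GorensteinFlatWitness (R : Type u) [CommRing R]
    (G : Type u) [AddCommGroup G] [Module R G] : Type (u + 1) where
  F : ℤ → Type u
  [acg : ∀ i, AddCommGroup (F i)]
  [mod : ∀ i, Module R (F i)]
  flat : ∀ i, Module.Flat R (F i)
  d : ∀ i : ℤ, F (i + 1) →ₗ[R] F i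
  d_comp_d : ∀ i : ℤ, (d i).comp (d (i + 1)) = 0
  exact : ∀ i : ℤ, LinearMap.ker (d i) = LinearMap.range (d (i + 1))
  tensor_exact : ∀ (E : Type u) [AddCommGroup E] [Module R E], Module.Injective R E →
    ∀ i : ℤ, LinearMap.ker (LinearMap.lTensor E (d i)) =
      LinearMap.range (LinearMap.lTensor E (d (i + 1)))
  im_iso : Nonempty (G ≃ₗ[R] LinearMap.range (d (-1)))

/-- `G` is a Gorenstein flat `R`-module. -/
def IsGorensteinFlat (R : Type u) [CommRing R]
    (G : Type u) [AddCommGroup G] [Module R G] : Prop :=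
  Nonempty (GorensteinFlatWitness R G)

/-- A witness for an exact sequence `0 → Gₙ → ⋯ → G₁ → G₀ → M → 0` with each `Gᵢ`
Gorenstein flat (modules beyond index `n` are trivial, which encodes that the
sequence stops at `Gₙ`). -/
structure GfdWitness (R : Type u) [CommRing R]
    (M : Type u) [AddCommGroup M] [Module R M] (n : ℕ) : Type (u + 1) where
  G : ℕ → Type u
  [acg : ∀ i, AddCommGroup (G i)]
  [mod : ∀ i, Module R (G i)]
  gf : ∀ i ≤ n, IsGorensteinFlat R (G i)
  triv : ∀ i, n < i → Subsingleton (G i)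
  π : G 0 →ₗ[R] M
  π_surj : Function.Surjective π
  d : ∀ i : ℕ, G (i + 1) →ₗ[R] G i
  exact_zero : LinearMap.ker π = LinearMap.range (d 0)
  exact : ∀ i : ℕ, LinearMap.ker (d i) = LinearMap.range (d (i + 1))

/-- The Gorenstein flat dimension of a module: the least `n` admitting an exact
sequence `0 → Gₙ → ⋯ → G₀ → M → 0` of Gorenstein flat modules, as an element
of `ℕ∞` (`⊤` if there is no such `n`). -/
noncomputable def gfd (R : Type u) [CommRing R]
    (M : Type u) [AddCommGroup M] [Module R M] : ℕ∞ :=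
  sInf {c : ℕ∞ | ∃ n : ℕ, c = n ∧ Nonempty (GfdWitness R M n)}

/-!
Gorenstein flatness of `X` unfolds to two conditions: `Tor` of positive degree of `X` against
every injective module vanishes, and `X` starts a chain of cosyzygies of flat modules along which
this vanishing persists. The chain is produced coinductively: any class of `Tor`-acyclic modules
in which every member has a cosyzygy again in the class consists of Gorenstein flat modules.

Flat base change preserves both conditions because an injective `S`-module is injective over `R`.

For the converse along a faithfully flat `R → S`, an injective `R`-module `E` is a retract of an
injective `S`-module containing `S ⊗ E`, so the vanishing descends. If `S ⊗ X` embeds in a flat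
`S`-module `F` with Gorenstein flat cokernel `C'`, then `X` embeds in `F`, which is flat over `R`,
and for `C = F / X` the module `S ⊗ C` is an extension of `C'` by the kernel of `S ⊗ F → F`. This
kernel is flat, so the chain can be continued once Gorenstein flat `S`-modules are closed under
extensions. Over a coherent ring they are: for an extension `X` of `B` by `A`, the embedding of
`A` into a flat module may be replaced by one into a double character module, which is flat and
to which maps from `A` extend along `A → X` because `B` is `Tor`-acyclic.
-/

section ShortExact

variable {R : Type*} [CommRing R]
variable {A B C : Type*} [AddCommGroup A] [AddCommGroup B] [AddCommGroup C]
  [Module R A] [Module R B] [Module R C]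

/-- The sequence `0 → A → B → C → 0` of linear maps is exact. -/
structure IsShortExact (f : A →ₗ[R] B) (g : B →ₗ[R] C) : Prop where
  injective : Function.Injective f
  exact : Function.Exact f g
  surjective : Function.Surjective g

variable (R A B C) in
/-- `B` is an extension of `C` by `A`: some sequence `0 → A → B → C → 0` is exact. -/
def IsExtension : Prop := ∃ (f : A →ₗ[R] B) (g : B →ₗ[R] C), IsShortExact f g

namespace IsShortExact

theorem isExtension {f : A →ₗ[R] B} {g : B →ₗ[R] C} (h : IsShortExact f g) :
    IsExtension R A B C :=
  ⟨f, g, h⟩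

theorem of_injective {f : A →ₗ[R] B} (hf : Function.Injective f) :
    IsShortExact f (LinearMap.range f).mkQ :=
  ⟨hf, LinearMap.exact_map_mkQ_range f, Submodule.mkQ_surjective _⟩

theorem of_surjective {g : B →ₗ[R] C} (hg : Function.Surjective g) :
    IsShortExact (LinearMap.ker g).subtype g :=
  ⟨Subtype.val_injective, LinearMap.exact_subtype_ker_map g, hg⟩

theorem inl_snd : IsShortExact (LinearMap.inl R A B) (LinearMap.snd R A B) :=
  ⟨LinearMap.inl_injective, .inl_snd, LinearMap.snd_surjective⟩

theorem lift {L : Type*} [AddCommGroup L] [Module R L] {f : A →ₗ[R] B} {g : B →ₗ[R] C}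
    (h : IsShortExact f g) (k : L →ₗ[R] B) (hk : g ∘ₗ k = 0) :
    ∃ k' : L →ₗ[R] A, f ∘ₗ k' = k :=
  ⟨LinearMap.codRestrictOfInjective k f h.injective
    fun x => (h.exact (k x)).1 (LinearMap.congr_fun hk x),
    LinearMap.codRestrictOfInjective_comp ..⟩

theorem cokernels {A₁ B₁ C₁ A₂ B₂ C₂ : Type*}
    [AddCommGroup A₁] [Module R A₁] [AddCommGroup B₁] [Module R B₁]
    [AddCommGroup C₁] [Module R C₁] [AddCommGroup A₂] [Module R A₂]
    [AddCommGroup B₂] [Module R B₂] [AddCommGroup C₂] [Module R C₂]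
    {i₁ : A₁ →ₗ[R] B₁} {p₁ : B₁ →ₗ[R] C₁} {i₂ : A₂ →ₗ[R] B₂} {p₂ : B₂ →ₗ[R] C₂}
    {α : A₁ →ₗ[R] A₂} {β : B₁ →ₗ[R] B₂} {γ : C₁ →ₗ[R] C₂}
    {a : A₂ →ₗ[R] A} {b : B₂ →ₗ[R] B} {c : C₂ →ₗ[R] C}
    (h₁ : Function.Exact i₁ p₁) (hp₁ : Function.Surjective p₁) (h₂ : IsShortExact i₂ p₂)
    (hα : Function.Exact α a) (ha : Function.Surjective a)
    (hβ : Function.Exact β b) (hb : Function.Surjective b) (hγ : IsShortExact γ c)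
    (hαβ : i₂ ∘ₗ α = β ∘ₗ i₁) (hβγ : p₂ ∘ₗ β = γ ∘ₗ p₁) : IsExtension R A B C := by
  have hαβ' x : i₂ (α x) = β (i₁ x) := LinearMap.congr_fun hαβ x
  have hβγ' x : p₂ (β x) = γ (p₁ x) := LinearMap.congr_fun hβγ x
  obtain ⟨i, hi⟩ := (LinearMap.exact_lcomp_of_exact_of_surjective B hα ha (b ∘ₗ i₂)).1 <| by
    ext x
    simp [hαβ', hβ.apply_apply_eq_zero]
  obtain ⟨p, hp⟩ := (LinearMap.exact_lcomp_of_exact_of_surjective C hβ hb (c ∘ₗ p₂)).1 <| by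
    ext x
    simp [hβγ', hγ.exact.apply_apply_eq_zero]
  have hi x : i (a x) = b (i₂ x) := LinearMap.congr_fun hi x
  have hp x : p (b x) = c (p₂ x) := LinearMap.congr_fun hp x
  refine ⟨i, p, (injective_iff_map_eq_zero i).2 fun x hx => ?_, fun y => ⟨fun hy => ?_, ?_⟩, ?_⟩
  · obtain ⟨x, rfl⟩ := ha x
    obtain ⟨y, hy⟩ := (hβ _).1 ((hi x).symm.trans hx)
    obtain ⟨z, rfl⟩ := (h₁ y).1 <| hγ.injective <| by
      rw [← hβγ', hy, h₂.exact.apply_apply_eq_zero, map_zero]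
    rw [← h₂.injective ((hαβ' z).trans hy), hα.apply_apply_eq_zero]
  · obtain ⟨y, rfl⟩ := hb y
    obtain ⟨z, hz⟩ := (hγ.exact _).1 ((hp y).symm.trans hy)
    obtain ⟨z, rfl⟩ := hp₁ z
    obtain ⟨x, hx⟩ := (h₂.exact (y - β z)).1 (by rw [map_sub, hβγ', hz, sub_self])
    exact ⟨a x, by rw [hi, hx, map_sub, hβ.apply_apply_eq_zero, sub_zero]⟩
  · rintro ⟨x, rfl⟩
    obtain ⟨x, rfl⟩ := ha x
    rw [hi, hp, h₂.exact.apply_apply_eq_zero, map_zero]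
  · exact .of_comp (g := b) <| by
      rw [show p ∘ b = c ∘ p₂ from funext hp]
      exact hγ.surjective.comp h₂.surjective

theorem exists_kernel_comp {B' C' : Type*} [AddCommGroup B'] [Module R B']
    [AddCommGroup C'] [Module R C'] {f : A →ₗ[R] B} {g : B →ₗ[R] B'}
    (hfg : IsShortExact f g) {i : C →ₗ[R] B'} {p : B' →ₗ[R] C'} (hip : IsShortExact i p) :
    ∃ (a : A →ₗ[R] LinearMap.ker (p ∘ₗ g)) (c : LinearMap.ker (p ∘ₗ g) →ₗ[R] C),
      (LinearMap.ker (p ∘ₗ g)).subtype ∘ₗ a = f ∧ IsShortExact a c := by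
  have hZ := of_surjective (g := p ∘ₗ g) (hip.surjective.comp hfg.surjective)
  obtain ⟨a, ha⟩ := hZ.lift f <| by
    rw [LinearMap.comp_assoc, hfg.exact.linearMap_comp_eq_zero, LinearMap.comp_zero]
  obtain ⟨c, hc⟩ :=
    hip.lift (g ∘ₗ (LinearMap.ker (p ∘ₗ g)).subtype) hZ.exact.linearMap_comp_eq_zero
  refine ⟨a, c, ha, .of_comp (f := (LinearMap.ker (p ∘ₗ g)).subtype) ?_, ?_, fun y => ?_⟩
  · rw [← LinearMap.coe_comp, ha]
    exact hfg.injective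
  · rw [← hip.injective.comp_exact_iff_exact, hc]
    refine fun z => (hfg.exact z).trans ⟨fun ⟨x, hx⟩ => ⟨x, Subtype.ext ?_⟩, fun ⟨x, hx⟩ => ⟨x, ?_⟩⟩
    · exact (LinearMap.congr_fun ha x).trans hx
    · exact (LinearMap.congr_fun ha x).symm.trans (congrArg Subtype.val hx)
  · obtain ⟨b, hb⟩ := hfg.surjective (i y)
    refine ⟨⟨b, ?_⟩, hip.injective ?_⟩
    · exact (congrArg p hb).trans (hip.exact.apply_apply_eq_zero y)
    · exact (LinearMap.congr_fun hc _).trans hb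

end IsShortExact

namespace IsExtension

theorem congr {A' C' : Type*} [AddCommGroup A'] [Module R A'] [AddCommGroup C'] [Module R C']
    (h : IsExtension R A B C) (eA : A ≃ₗ[R] A') (eC : C ≃ₗ[R] C') : IsExtension R A' B C' := by
  obtain ⟨f, g, hfg⟩ := h
  refine ⟨f ∘ₗ eA.symm.toLinearMap, eC.toLinearMap ∘ₗ g, hfg.injective.comp eA.symm.injective, ?_,
    eC.surjective.comp hfg.surjective⟩
  exact LinearEquiv.precomp_exact_iff_exact.2 (LinearEquiv.postcomp_exact_iff_exact.2 hfg.exact)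

theorem exists_cokernel_comp {B' C' : Type*} [AddCommGroup B'] [Module R B']
    [AddCommGroup C'] [Module R C'] (h : IsExtension R A B C) (h' : IsExtension R B B' C') :
    ∃ f : A →ₗ[R] B', Function.Injective f ∧ IsExtension R C (B' ⧸ LinearMap.range f) C' := by
  obtain ⟨f, g, hfg⟩ := h
  obtain ⟨i, p, hip⟩ := h'
  have hif : Function.Injective (i ∘ₗ f) := hip.injective.comp hfg.injective
  have hid : IsShortExact (0 : PUnit →ₗ[R] C') LinearMap.id :=
    ⟨Function.injective_of_subsingleton _, (LinearMap.exact_zero_iff_injective _ _).2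
      Function.injective_id, Function.surjective_id⟩
  exact ⟨i ∘ₗ f, hif, IsShortExact.cokernels (i₁ := LinearMap.id) (p₁ := 0)
    ((LinearMap.exact_zero_iff_surjective _ _).2 Function.surjective_id) (fun _ => ⟨0, rfl⟩)
    hip hfg.exact hfg.surjective (IsShortExact.of_injective hif).exact
    (Submodule.mkQ_surjective _) hid rfl (by ext x; simp [hip.exact.apply_apply_eq_zero])⟩

theorem prod_right (P : Type*) [AddCommGroup P] [Module R P] (h : IsExtension R A B C) :
    IsExtension R A (B × P) (C × P) := by
  obtain ⟨f, g, hfg⟩ := h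
  refine ⟨LinearMap.inl R B P ∘ₗ f, g.prodMap LinearMap.id,
    LinearMap.inl_injective.comp hfg.injective, fun x => ?_,
    hfg.surjective.prodMap Function.surjective_id⟩
  have hx : g x.1 = 0 ↔ ∃ a, f a = x.1 := hfg.exact x.1
  simp [Prod.ext_iff, hx, eq_comm (b := x.2)]

theorem schanuel {P K : Type*} [AddCommGroup P] [Module R P] [Module.Projective R P]
    [AddCommGroup K] [Module R K] (h : IsExtension R A B C) (hK : IsExtension R K P C) :
    IsExtension R K (A × P) B := by
  obtain ⟨f, g, hfg⟩ := h
  obtain ⟨i, p, hip⟩ := hK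
  obtain ⟨s, hs⟩ := Module.projective_lifting_property g p hfg.surjective
  have hs' x : g (s x) = p x := LinearMap.congr_fun hs x
  obtain ⟨r, hr⟩ := hfg.lift (-(s ∘ₗ i)) (by ext x; simp [hs', hip.exact.apply_apply_eq_zero])
  have hr' x : f (r x) = -s (i x) := LinearMap.congr_fun hr x
  refine ⟨r.prod i, f.coprod s, fun x y hxy => hip.injective (congrArg Prod.snd hxy), ?_,
    fun y => ?_⟩
  · rintro ⟨k, x⟩
    refine ⟨fun hx => ?_, ?_⟩
    · obtain ⟨a, rfl⟩ := (hip.exact x).1 <| by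
        simpa [hs', hfg.exact.apply_apply_eq_zero] using congrArg g hx
      exact ⟨a, Prod.ext (hfg.injective <| (hr' a).trans (eq_neg_of_add_eq_zero_left hx).symm) rfl⟩
    · rintro ⟨a, ha⟩
      simp [← ha, hr']
  · obtain ⟨x, hx⟩ := hip.surjective (g y)
    obtain ⟨k, hk⟩ := (hfg.exact (y - s x)).1 (by simp [hs', hx])
    exact ⟨(k, x), by simp [hk]⟩

end IsExtension

end ShortExact

section LTensor

variable {R : Type*} [CommRing R]
variable {F K P W W' X : Type*} [AddCommGroup F] [Module R F] [AddCommGroup K] [Module R K]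
  [AddCommGroup P] [Module R P] [AddCommGroup W] [Module R W] [AddCommGroup W'] [Module R W']
  [AddCommGroup X] [Module R X]

theorem rTensor_lTensor_apply (a : W' →ₗ[R] P) (f : K →ₗ[R] F) (x : W' ⊗[R] K) :
    a.rTensor F (f.lTensor W' x) = f.lTensor P (a.rTensor K x) := by
  rw [← LinearMap.comp_apply, ← LinearMap.comp_apply, LinearMap.rTensor_comp_lTensor,
    LinearMap.lTensor_comp_rTensor]

theorem lTensor_injective_of_lTensor_injective {a : W' →ₗ[R] P} {f : K →ₗ[R] F}
    (hf : Function.Injective (f.lTensor W')) (ha : Function.Injective (a.lTensor F)) :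
    Function.Injective (a.lTensor K) := by
  rw [LinearMap.lTensor_inj_iff_rTensor_inj] at ha ⊢
  refine .of_comp (f := f.lTensor P) ?_
  rw [show f.lTensor P ∘ a.rTensor K = a.rTensor F ∘ f.lTensor W' from
    funext fun x => (rTensor_lTensor_apply a f x).symm]
  exact ha.comp hf

theorem lTensor_injective_of_exact {a : W' →ₗ[R] P} {b : P →ₗ[R] W} {f : K →ₗ[R] F}
    {g : F →ₗ[R] X} (hab : Function.Exact a b) (hb : Function.Surjective b)
    (hfg : Function.Exact f g) (hg : Function.Surjective g)
    (ha : Function.Injective (a.lTensor F)) (hf : Function.Injective (f.lTensor W)) :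
    Function.Injective (a.lTensor X) := by
  rw [LinearMap.lTensor_inj_iff_rTensor_inj] at ha ⊢
  refine (injective_iff_map_eq_zero _).2 fun w hw => ?_
  obtain ⟨y, rfl⟩ := LinearMap.lTensor_surjective W' hg w
  rw [rTensor_lTensor_apply] at hw
  obtain ⟨z, hz⟩ := (lTensor_exact P hfg hg _).1 hw
  have hbz : b.rTensor K z = 0 := hf <| by
    rw [← rTensor_lTensor_apply, hz, (rTensor_exact F hab hb).apply_apply_eq_zero, map_zero]
  obtain ⟨v, rfl⟩ := (rTensor_exact K hab hb _).1 hbz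
  rw [← rTensor_lTensor_apply] at hz
  rw [← ha hz, (lTensor_exact W' hfg hg).apply_apply_eq_zero]

end LTensor

section Tor

variable {R : Type u} [CommRing R]
variable {A B F K L W W' X Y : Type u}
  [AddCommGroup A] [Module R A] [AddCommGroup B] [Module R B] [AddCommGroup F] [Module R F]
  [AddCommGroup K] [Module R K] [AddCommGroup L] [Module R L] [AddCommGroup W] [Module R W]
  [AddCommGroup W'] [Module R W'] [AddCommGroup X] [Module R X] [AddCommGroup Y] [Module R Y]

variable (R W X) in
/-- `Tor₁(W, X) = 0`, stated as: every monomorphism with cokernel `X` remains one after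
tensoring with `W`. -/
def TorOneVanishes : Prop :=
  ∀ ⦃A B : Type u⦄ [AddCommGroup A] [AddCommGroup B] [Module R A] [Module R B]
    ⦃f : A →ₗ[R] B⦄ ⦃g : B →ₗ[R] X⦄, IsShortExact f g → Function.Injective (f.lTensor W)

variable (R K X) in
/-- `K` is a first syzygy of `X` in some flat resolution. -/
def IsFlatSyzygy : Prop :=
  ∃ F : ModuleCat.{u} R, Module.Flat R F ∧ IsExtension R K F X

variable (R X) in
theorem exists_free_presentation :
    ∃ (P K : ModuleCat.{u} R) (f : K →ₗ[R] P) (g : P →ₗ[R] X),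
      Module.Free R P ∧ IsShortExact f g :=
  ⟨.of R (X →₀ R), .of R (LinearMap.ker (Finsupp.linearCombination R (id : X → X))),
    Submodule.subtype _, Finsupp.linearCombination R id, inferInstanceAs (Module.Free R (X →₀ R)),
    .of_surjective (Finsupp.linearCombination_id_surjective R X)⟩

variable (R X) in
theorem exists_isFlatSyzygy : ∃ K : ModuleCat.{u} R, IsFlatSyzygy R K X := by
  obtain ⟨P, K, f, g, _, hfg⟩ := exists_free_presentation R X
  exact ⟨K, P, inferInstance, hfg.isExtension⟩

theorem IsFlatSyzygy.congr (h : IsFlatSyzygy R K X) (eK : K ≃ₗ[R] L) (eX : X ≃ₗ[R] Y) :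
    IsFlatSyzygy R L Y := by
  obtain ⟨F, hF, h⟩ := h
  exact ⟨F, hF, h.congr eK eX⟩

namespace TorOneVanishes

theorem of_lTensor_injective [Module.Flat R F] {f : K →ₗ[R] F} {g : F →ₗ[R] X}
    (hfg : IsShortExact f g) (hf : Function.Injective (f.lTensor W)) : TorOneVanishes R W X := by
  intro A B _ _ _ _ i p hip
  obtain ⟨P, W', a, b, _, hab⟩ := exists_free_presentation R W
  have ha : Function.Injective (a.lTensor X) :=
    lTensor_injective_of_exact hab.exact hab.surjective hfg.exact hfg.surjective
      (Module.Flat.lTensor_preserves_injective_linearMap a hab.injective) hf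
  exact lTensor_injective_of_exact hip.exact hip.surjective hab.exact hab.surjective
    (Module.Flat.lTensor_preserves_injective_linearMap i hip.injective) ha

theorem symm (h : TorOneVanishes R W X) : TorOneVanishes R X W := by
  intro W' P _ _ _ _ a b hab
  obtain ⟨F, K, f, g, _, hfg⟩ := exists_free_presentation R X
  exact lTensor_injective_of_exact hab.exact hab.surjective hfg.exact hfg.surjective
    (Module.Flat.lTensor_preserves_injective_linearMap a hab.injective) (h hfg)

theorem of_flat_left [Module.Flat R W] : TorOneVanishes R W X :=
  fun _ _ _ _ _ _ f _ hfg => Module.Flat.lTensor_preserves_injective_linearMap f hfg.injective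

theorem of_flat_right [Module.Flat R X] : TorOneVanishes R W X :=
  of_flat_left.symm

theorem congr_right (h : TorOneVanishes R W X) (e : X ≃ₗ[R] Y) : TorOneVanishes R W Y :=
  fun _ _ _ _ _ _ f g hfg => h (f := f) (g := e.symm.toLinearMap ∘ₗ g)
    ⟨hfg.injective, LinearEquiv.postcomp_exact_iff_exact.2 hfg.exact,
      e.symm.surjective.comp hfg.surjective⟩

theorem ext (h : IsExtension R A X B) (hA : TorOneVanishes R W A) (hB : TorOneVanishes R W B) :
    TorOneVanishes R W X := by
  obtain ⟨i, p, hip⟩ := h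
  intro A' B' _ _ _ _ f g hfg
  obtain ⟨a, c, rfl, hac⟩ := hfg.exists_kernel_comp hip
  rw [LinearMap.lTensor_comp]
  have hpg : Function.Surjective (p ∘ₗ g) := hip.surjective.comp hfg.surjective
  exact (hB (.of_surjective hpg)).comp (hA hac)

theorem ker (h : IsExtension R A X B) (hWW' : IsFlatSyzygy R W' W)
    (hX : TorOneVanishes R W X) (hB : TorOneVanishes R W' B) : TorOneVanishes R W A := by
  obtain ⟨i, p, hip⟩ := h
  obtain ⟨P, _, a, b, hab⟩ := hWW'
  exact (of_lTensor_injective hab (lTensor_injective_of_lTensor_injective (hB hip)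
    (hX.symm hab))).symm

theorem of_isFlatSyzygy (hKX : IsFlatSyzygy R K X) (hWW' : IsFlatSyzygy R W' W)
    (h : TorOneVanishes R W K) : TorOneVanishes R W' X := by
  obtain ⟨F, _, f, g, hfg⟩ := hKX
  obtain ⟨P, _, a, b, hab⟩ := hWW'
  refine of_lTensor_injective hfg (lTensor_injective_of_lTensor_injective (h.symm hab) ?_)
  exact Module.Flat.lTensor_preserves_injective_linearMap f hfg.injective

theorem exists_extension (h : TorOneVanishes R L B) {i : A →ₗ[R] X} {p : X →ₗ[R] B}
    (hip : IsShortExact i p) (j : A →ₗ[R] CharacterModule L) :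
    ∃ u : X →ₗ[R] CharacterModule L, u ∘ₗ i = j :=
  rTensor_injective_iff_lcomp_surjective.1 ((LinearMap.lTensor_inj_iff_rTensor_inj ..).1 (h hip)) j

end TorOneVanishes

theorem flat_of_forall_torOneVanishes
    (h : ∀ W : ModuleCat.{u} R, TorOneVanishes R W X) : Module.Flat R X :=
  Module.Flat.iff_lTensor_preserves_injective_linearMap.2 fun _ B _ _ _ _ f hf =>
    (h (.of R (B ⧸ LinearMap.range f))).symm (.of_injective hf)

theorem IsExtension.flat (h : IsExtension R A X B) [Module.Flat R A] [Module.Flat R B] :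
    Module.Flat R X :=
  flat_of_forall_torOneVanishes fun _ => .ext h .of_flat_right .of_flat_right

variable (R) in
/-- The modules obtained from injective modules by iterating first syzygies. -/
inductive IsInjectiveSyzygy : ModuleCat.{u} R → Prop
  | of_injective (E : ModuleCat.{u} R) (hE : Module.Injective R E) : IsInjectiveSyzygy E
  | of_isFlatSyzygy (K W : ModuleCat.{u} R) (hKW : IsFlatSyzygy R K W)
      (hW : IsInjectiveSyzygy W) : IsInjectiveSyzygy K

variable (R X) in
/-- `Torₙ(E, X) = 0` for all `n ≥ 1` and all injective `E`; higher `Tor` is encoded by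
dimension shifting in the first variable. -/
def IsInjectiveTorAcyclic : Prop :=
  ∀ ⦃W : ModuleCat.{u} R⦄, IsInjectiveSyzygy R W → TorOneVanishes R W X

namespace IsInjectiveTorAcyclic

theorem torOneVanishes (h : IsInjectiveTorAcyclic R X) [Module.Injective R W] :
    TorOneVanishes R W X :=
  h (.of_injective (.of R W) ‹_›)

theorem of_flat [Module.Flat R X] : IsInjectiveTorAcyclic R X :=
  fun _ _ => .of_flat_right

theorem ext (h : IsExtension R A X B) (hA : IsInjectiveTorAcyclic R A)
    (hB : IsInjectiveTorAcyclic R B) : IsInjectiveTorAcyclic R X :=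
  fun _ hW => .ext h (hA hW) (hB hW)

theorem ker (h : IsExtension R A X B) (hX : IsInjectiveTorAcyclic R X)
    (hB : IsInjectiveTorAcyclic R B) : IsInjectiveTorAcyclic R A := by
  intro W hW
  obtain ⟨W', hW'⟩ := exists_isFlatSyzygy R W
  exact .ker h hW' (hX hW) (hB (.of_isFlatSyzygy W' W hW' hW))

theorem of_class (c : ModuleCat.{u} R → Prop)
    (hTor : ∀ X, c X → ∀ E : ModuleCat.{u} R, Module.Injective R E → TorOneVanishes R E X)
    (hSyz : ∀ X, c X → ∃ K, c K ∧ IsFlatSyzygy R K X) {X : ModuleCat.{u} R} (hX : c X) :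
    IsInjectiveTorAcyclic R X := by
  intro W hW
  induction hW generalizing X with
  | of_injective E hE => exact hTor X hX E hE
  | of_isFlatSyzygy K W hKW _ ih =>
    obtain ⟨X', hX', hXX'⟩ := hSyz X hX
    exact .of_isFlatSyzygy hXX' hKW (ih hX')

end IsInjectiveTorAcyclic

end Tor

section GorensteinFlat

variable {R : Type u} [CommRing R]
variable {X Y : Type u} [AddCommGroup X] [Module R X] [AddCommGroup Y] [Module R Y]

theorem exact_comp_comp {F₀ F₁ F₂ Z₁ Z₂ : Type*} [AddCommGroup F₀] [Module R F₀]
    [AddCommGroup F₁] [Module R F₁] [AddCommGroup F₂] [Module R F₂]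
    [AddCommGroup Z₁] [Module R Z₁] [AddCommGroup Z₂] [Module R Z₂]
    {i : Z₁ →ₗ[R] F₀} {p : F₁ →ₗ[R] Z₁} {i' : Z₂ →ₗ[R] F₁} {p' : F₂ →ₗ[R] Z₂}
    (hi : Function.Injective i) (hip : Function.Exact i' p) (hp' : Function.Surjective p') :
    Function.Exact (i' ∘ₗ p') (i ∘ₗ p) :=
  hp'.comp_exact_iff_exact.2 (hi.comp_exact_iff_exact.2 hip)

theorem injective_of_exact_comp {F₀ F₁ F₂ Z : Type*} [AddCommGroup F₀] [Module R F₀]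
    [AddCommGroup F₁] [Module R F₁] [AddCommGroup F₂] [Module R F₂] [AddCommGroup Z] [Module R Z]
    {d : F₂ →ₗ[R] F₁} {q : F₁ →ₗ[R] Z} {i : Z →ₗ[R] F₀} (hq : Function.Surjective q)
    (hdq : q ∘ₗ d = 0) (h : Function.Exact d (i ∘ₗ q)) : Function.Injective i := by
  refine (injective_iff_map_eq_zero i).2 fun z hz => ?_
  obtain ⟨y, rfl⟩ := hq z
  obtain ⟨x, rfl⟩ := (h y).1 hz
  exact LinearMap.congr_fun hdq x

/-- The sequences of syzygy modules of the complexes defining Gorenstein flatness: `Z i` plays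
the role of the cokernel of `F (i + 1) → F i`. -/
structure IsCompleteSyzygySequence (Z : ℤ → ModuleCat.{u} R) : Prop where
  isFlatSyzygy : ∀ i, IsFlatSyzygy R (Z (i + 1)) (Z i)
  torOneVanishes : ∀ i, ∀ E : ModuleCat.{u} R, Module.Injective R E → TorOneVanishes R E (Z i)

namespace IsCompleteSyzygySequence

variable {Z : ℤ → ModuleCat.{u} R}

theorem shift (h : IsCompleteSyzygySequence Z) (n : ℤ) :
    IsCompleteSyzygySequence fun i => Z (n + i) :=
  ⟨fun i => add_assoc n i 1 ▸ h.isFlatSyzygy (n + i),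
    fun i => h.torOneVanishes (n + i)⟩

theorem isGorensteinFlat (h : IsCompleteSyzygySequence Z) (e : X ≃ₗ[R] Z 0) :
    IsGorensteinFlat R X := by
  choose F hF f g hfg using h.isFlatSyzygy
  have hexact i : Function.Exact (f (i + 1) ∘ₗ g (i + 1 + 1)) (f i ∘ₗ g (i + 1)) :=
    exact_comp_comp (hfg i).injective (hfg (i + 1)).exact (hfg (i + 1 + 1)).surjective
  refine ⟨{
    F := fun i => F i
    flat := hF
    d := fun i => f i ∘ₗ g (i + 1)
    d_comp_d := fun i => (hexact i).linearMap_comp_eq_zero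
    exact := fun i => (hexact i).linearMap_ker_eq
    tensor_exact := fun E _ _ hE i => ?_
    im_iso := ?_ }⟩
  · simp only [LinearMap.lTensor_comp]
    exact (exact_comp_comp (h.torOneVanishes i (.of R E) hE (hfg i))
      (lTensor_exact E (hfg (i + 1)).exact (hfg (i + 1)).surjective)
      (LinearMap.lTensor_surjective E (hfg (i + 1 + 1)).surjective)).linearMap_ker_eq
  · have hrange : LinearMap.range (f (-1) ∘ₗ g (-1 + 1)) = LinearMap.range (f (-1)) :=
      LinearMap.range_comp_of_range_eq_top _ (LinearMap.range_eq_top.2 (hfg _).surjective)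
    exact ⟨e ≪≫ₗ LinearEquiv.ofInjective (f (-1)) (hfg (-1)).injective ≪≫ₗ
      LinearEquiv.ofEq _ _ hrange.symm⟩

end IsCompleteSyzygySequence

namespace GorensteinFlatWitness

attribute [instance] acg mod

variable (w : GorensteinFlatWitness R X)

theorem isCompleteSyzygySequence :
    IsCompleteSyzygySequence fun i => ModuleCat.of R (w.F i ⧸ LinearMap.range (w.d i)) := by
  let q i := (LinearMap.range (w.d i)).mkQ
  let j i := (LinearMap.range (w.d (i + 1))).liftQ (w.d i) (w.exact i).ge
  have hq i : Function.Surjective (q i) := Submodule.mkQ_surjective _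
  have hqd i : q i ∘ₗ w.d i = 0 := LinearMap.range_mkQ_comp _
  have hjq i : j i ∘ₗ q (i + 1) = w.d i := Submodule.liftQ_mkQ _ _ _
  have hj i : IsShortExact (j i) (q i) := by
    refine ⟨injective_of_exact_comp (hq (i + 1)) (hqd (i + 1)) ?_, ?_, hq i⟩
    · rw [hjq, LinearMap.exact_iff]
      exact w.exact i
    · refine (hq (i + 1)).comp_exact_iff_exact.1 ?_
      change Function.Exact (j i ∘ₗ q (i + 1)) (q i)
      rw [hjq]
      exact LinearMap.exact_map_mkQ_range (w.d i)
  have := w.flat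
  refine ⟨fun i => ⟨.of R (w.F i), w.flat i, (hj i).isExtension⟩, fun i E hE => ?_⟩
  refine .of_lTensor_injective (hj i) (injective_of_exact_comp (q := (q (i + 1)).lTensor E)
    (d := (w.d (i + 1)).lTensor E) (LinearMap.lTensor_surjective E (hq (i + 1))) ?_ ?_)
  · rw [← LinearMap.lTensor_comp, hqd, LinearMap.lTensor_zero]
  · rw [← LinearMap.lTensor_comp, hjq, LinearMap.exact_iff]
    exact w.tensor_exact E hE i

theorem nonempty_equiv_zero : Nonempty (X ≃ₗ[R] w.F 0 ⧸ LinearMap.range (w.d 0)) := by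
  obtain ⟨e⟩ := w.im_iso
  exact ⟨e ≪≫ₗ (w.d (-1)).quotKerEquivRange.symm ≪≫ₗ Submodule.quotEquivOfEq _ _ (w.exact (-1))⟩

end GorensteinFlatWitness

theorem exists_int_chain {α : Type*} {r : α → α → Prop} {p q : α → Prop}
    (hqp : ∀ x, q x → p x) (hp : ∀ x, p x → ∃ y, p y ∧ r y x)
    (hq : ∀ x, q x → ∃ y, q y ∧ r x y) {x : α} (hx : q x) :
    ∃ Z : ℤ → α, Z 0 = x ∧ (∀ i, p (Z i)) ∧ ∀ i, r (Z (i + 1)) (Z i) := by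
  have hp' (x : {x // p x}) : ∃ y : {x // p x}, r y x :=
    let ⟨y, hy, hyx⟩ := hp x x.2
    ⟨⟨y, hy⟩, hyx⟩
  have hq' (x : {x // q x}) : ∃ y : {x // q x}, r x y :=
    let ⟨y, hy, hxy⟩ := hq x x.2
    ⟨⟨y, hy⟩, hxy⟩
  choose up hup using hp'
  choose down hdown using hq'
  let Z : ℤ → α
    | .ofNat n => up^[n] ⟨x, hqp x hx⟩
    | .negSucc n => down^[n + 1] ⟨x, hx⟩
  refine ⟨Z, rfl, ?_, ?_⟩
  · rintro (n | n)
    exacts [Subtype.property _, hqp _ (Subtype.property _)]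
  · rintro (n | _ | n)
    · change r (up^[n + 1] _) (up^[n] _)
      simpa only [← Function.iterate_succ_apply'] using hup (up^[n] ⟨x, hqp x hx⟩)
    · exact hdown ⟨x, hx⟩
    · change r (down^[n + 1] _) (down^[n + 2] _)
      simpa only [← Function.iterate_succ_apply'] using hdown (down^[n + 1] ⟨x, hx⟩)

namespace IsGorensteinFlat

theorem exists_isCompleteSyzygySequence (h : IsGorensteinFlat R X) :
    ∃ Z : ℤ → ModuleCat.{u} R, IsCompleteSyzygySequence Z ∧ Nonempty (X ≃ₗ[R] Z 0) :=
  let ⟨w⟩ := h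
  ⟨_, w.isCompleteSyzygySequence, w.nonempty_equiv_zero⟩

theorem congr (h : IsGorensteinFlat R X) (e : X ≃ₗ[R] Y) : IsGorensteinFlat R Y := by
  obtain ⟨Z, hZ, ⟨e'⟩⟩ := h.exists_isCompleteSyzygySequence
  exact hZ.isGorensteinFlat (e.symm ≪≫ₗ e')

theorem exists_syzygy (h : IsGorensteinFlat R X) :
    ∃ K : ModuleCat.{u} R, IsGorensteinFlat R K ∧ IsFlatSyzygy R K X := by
  obtain ⟨Z, hZ, ⟨e⟩⟩ := h.exists_isCompleteSyzygySequence
  have hsyz : IsFlatSyzygy R (Z 1) (Z 0) := hZ.isFlatSyzygy 0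
  exact ⟨Z 1, (hZ.shift 1).isGorensteinFlat (.refl R _), hsyz.congr (.refl R _) e.symm⟩

theorem exists_cosyzygy (h : IsGorensteinFlat R X) :
    ∃ C : ModuleCat.{u} R, IsGorensteinFlat R C ∧ IsFlatSyzygy R X C := by
  obtain ⟨Z, hZ, ⟨e⟩⟩ := h.exists_isCompleteSyzygySequence
  have hsyz : IsFlatSyzygy R (Z 0) (Z (-1)) := neg_add_cancel (1 : ℤ) ▸ hZ.isFlatSyzygy (-1)
  exact ⟨Z (-1), (hZ.shift (-1)).isGorensteinFlat (.refl R _), hsyz.congr e.symm (.refl R _)⟩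

theorem isInjectiveTorAcyclic (h : IsGorensteinFlat R X) : IsInjectiveTorAcyclic R X := by
  refine .of_class (fun Y => IsGorensteinFlat R Y) (fun Y hY E hE => ?_)
    (fun Y hY => hY.exists_syzygy) (X := .of R X) h
  obtain ⟨Z, hZ, ⟨e⟩⟩ := hY.exists_isCompleteSyzygySequence
  exact (hZ.torOneVanishes 0 E hE).congr_right e.symm

theorem of_class (c : ModuleCat.{u} R → Prop) (hTor : ∀ X, c X → IsInjectiveTorAcyclic R X)
    (hCosyz : ∀ X, c X → ∃ Y, c Y ∧ IsFlatSyzygy R X Y) {X : ModuleCat.{u} R} (hX : c X) :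
    IsGorensteinFlat R X := by
  have hSyz (Y : ModuleCat.{u} R) (hY : IsInjectiveTorAcyclic R Y) :
      ∃ K : ModuleCat.{u} R, IsInjectiveTorAcyclic R K ∧ IsFlatSyzygy R K Y := by
    obtain ⟨K, F, hF, hKF⟩ := exists_isFlatSyzygy R Y
    exact ⟨K, .ker hKF .of_flat hY, F, hF, hKF⟩
  obtain ⟨Z, rfl, hZTor, hZSyz⟩ := exists_int_chain hTor hSyz hCosyz hX
  exact IsCompleteSyzygySequence.isGorensteinFlat
    ⟨hZSyz, fun i _ _ => (hZTor i).torOneVanishes⟩ (.refl R _)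

theorem of_isFlatSyzygy (hX : IsInjectiveTorAcyclic R X) (h : IsFlatSyzygy R X Y)
    (hY : IsGorensteinFlat R Y) : IsGorensteinFlat R X := by
  refine of_class (fun X => IsInjectiveTorAcyclic R X ∧
    ∃ C : ModuleCat.{u} R, IsGorensteinFlat R C ∧ IsFlatSyzygy R X C) (fun _ h => h.1) ?_
    (X := .of R X) ⟨hX, .of R Y, hY, h⟩
  rintro X ⟨-, C, hC, hXC⟩
  exact ⟨C, ⟨hC.isInjectiveTorAcyclic, hC.exists_cosyzygy⟩, hXC⟩

theorem of_flat [Module.Flat R X] : IsGorensteinFlat R X := by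
  refine of_class (fun Y => Module.Flat R Y) (fun _ _ => .of_flat) (fun Y hY => ?_)
    (X := .of R X) ‹_›
  have hY' : IsExtension R Y (Y × PUnit.{u + 1}) PUnit.{u + 1} := IsShortExact.inl_snd.isExtension
  exact ⟨.of R PUnit.{u + 1}, inferInstanceAs (Module.Flat R PUnit.{u + 1}),
    .of R (Y × PUnit.{u + 1}), hY'.flat, hY'⟩

end IsGorensteinFlat

end GorensteinFlat

section Character

variable {R : Type u} [CommRing R]
variable {A B C L : Type*} [AddCommGroup A] [Module R A] [AddCommGroup B] [Module R B]
  [AddCommGroup C] [Module R C] [AddCommGroup L] [Module R L]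

theorem exact_characterModule_dual {f : A →ₗ[R] B} {g : B →ₗ[R] C} (h : Function.Exact f g) :
    Function.Exact (CharacterModule.dual g) (CharacterModule.dual f) := by
  refine fun c => ⟨fun hc => ?_, ?_⟩
  · let g' : B ⧸ LinearMap.ker g →ₗ[R] C := (LinearMap.ker g).liftQ g le_rfl
    have hg' : Function.Injective g' :=
      LinearMap.ker_eq_bot.1 (Submodule.ker_liftQ_eq_bot _ _ _ le_rfl)
    let c' : CharacterModule (B ⧸ LinearMap.ker g) :=
      QuotientAddGroup.lift (LinearMap.ker g).toAddSubgroup c fun y hy => by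
        obtain ⟨x, rfl⟩ := (h y).1 hy
        exact DFunLike.congr_fun hc x
    obtain ⟨k, hk⟩ := CharacterModule.dual_surjective_of_injective g' hg' c'
    refine ⟨k, ?_⟩
    ext y
    exact DFunLike.congr_fun hk (Submodule.Quotient.mk y)
  · rintro ⟨k, rfl⟩
    ext x
    exact (congrArg k (h.apply_apply_eq_zero x)).trans (map_zero k)

/-- The adjoint of a linear map into a character module, from the symmetry of `A ⊗ B`. -/
noncomputable def characterTranspose (h : A →ₗ[R] CharacterModule B) :
    B →ₗ[R] CharacterModule A :=
  CharacterModule.curry (CharacterModule.dual (TensorProduct.comm R B A).toLinearMap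
    (CharacterModule.uncurry h))

variable (R L) in
/-- The evaluation map from a module to its double character module. -/
noncomputable def characterEval : L →ₗ[R] CharacterModule (CharacterModule L) :=
  characterTranspose LinearMap.id

theorem characterEval_injective : Function.Injective (characterEval R L) :=
  (injective_iff_map_eq_zero _).2 fun _ hl =>
    CharacterModule.eq_zero_of_character_apply fun c => DFunLike.congr_fun hl c

theorem lTensor_characterEval_injective (N : Type*) [AddCommGroup N] [Module R N] :
    Function.Injective ((characterEval R L).lTensor N) := by
  rw [LinearMap.lTensor_inj_iff_rTensor_inj, rTensor_injective_iff_lcomp_surjective]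
  exact fun h => ⟨CharacterModule.dual (characterTranspose h), rfl⟩

theorem characterModule_injective (L : Type u) [AddCommGroup L] [Module R L] [Module.Flat R L] :
    Module.Injective R (CharacterModule L) :=
  Module.Baer.injective (Module.Flat.iff_characterModule_baer.1 ‹_›)

end Character

section Coherent

/-- A commutative ring is coherent if its finitely generated ideals are finitely presented. -/
class IsCoherentRing (R : Type*) [CommRing R] : Prop where
  finitePresentation_of_fg : ∀ I : Ideal R, I.FG → Module.FinitePresentation R I

instance (R : Type*) [CommRing R] [IsNoetherianRing R] : IsCoherentRing R :=
  ⟨fun I _ => Module.finitePresentation_of_finite R I⟩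

section

variable {R : Type*} [CommRing R]

theorem exists_span_eq_ker_linearCombination [IsCoherentRing R] {ι : Type*} [Fintype ι]
    (f : ι → R) : ∃ (k : ℕ) (r : Fin k → ι → R),
      Submodule.span R (Set.range r) = LinearMap.ker (Fintype.linearCombination R f) := by
  let φ : (ι → R) →ₗ[R] R := Fintype.linearCombination R f
  have : Module.FinitePresentation R (LinearMap.range φ) :=
    IsCoherentRing.finitePresentation_of_fg _ (Module.Finite.iff_fg.1 inferInstance)
  have hker := Module.FinitePresentation.fg_ker φ.rangeRestrict φ.surjective_rangeRestrict
  rw [LinearMap.ker_rangeRestrict] at hker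
  exact Submodule.fg_iff_exists_fin_generating_family.1 hker

variable {ι κ E : Type*} [Fintype ι] [AddCommGroup E] [Module R E]

variable (E) in
/-- The map `(eᵢ)ᵢ ↦ (∑ᵢ rⱼᵢ eᵢ)ⱼ` given by a matrix of scalars acting on tuples in a module. -/
noncomputable def piLinearCombination (r : κ → ι → R) : (ι → E) →ₗ[R] κ → E :=
  LinearMap.pi fun j => ∑ i, r j i • LinearMap.proj i

theorem piLinearCombination_apply (r : κ → ι → R) (e : ι → E) (j : κ) :
    piLinearCombination E r e j = ∑ i, r j i • e i := by
  simp [piLinearCombination]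

theorem characterModule_sum_apply (c : ι → CharacterModule E) (e : E) :
    (∑ i, c i) e = ∑ i, c i e :=
  AddMonoidHom.finsetSum_apply ..

end

variable {R : Type u} [CommRing R] {ι κ : Type*} [Fintype ι]
variable {E : Type u} [AddCommGroup E] [Module R E]

theorem exact_piLinearCombination_of_injective [Module.Injective R E] {n : ℕ} {f : Fin n → R}
    {r : κ → Fin n → R}
    (hr : Submodule.span R (Set.range r) = LinearMap.ker (Fintype.linearCombination R f)) :
    Function.Exact (LinearMap.pi fun i => f i • LinearMap.id : E →ₗ[R] Fin n → E)
      (piLinearCombination E r) := by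
  let φ : (Fin n → R) →ₗ[R] R := Fintype.linearCombination R f
  refine fun e => ⟨fun he => ?_, ?_⟩
  · have hker : LinearMap.ker φ ≤ LinearMap.ker (Fintype.linearCombination R e) := by
      rw [← hr, Submodule.span_le]
      rintro _ ⟨j, rfl⟩
      exact (piLinearCombination_apply r e j).symm.trans (congrFun he j)
    obtain ⟨h, hh⟩ := Module.Injective.out ((LinearMap.ker φ).liftQ φ le_rfl)
      (LinearMap.ker_eq_bot.1 (Submodule.ker_liftQ_eq_bot _ _ _ le_rfl))
      ((LinearMap.ker φ).liftQ (Fintype.linearCombination R e) hker)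
    refine ⟨h 1, funext fun i => ?_⟩
    have hi : h (φ (Pi.single i 1)) = Fintype.linearCombination R e (Pi.single i 1) :=
      hh (Submodule.Quotient.mk _)
    simp only [φ, Fintype.linearCombination_apply_single, one_smul] at hi
    rw [← hi, ← mul_one (f i), ← smul_eq_mul, map_smul]
    rfl
  · rintro ⟨y, rfl⟩
    ext j
    have hj : Fintype.linearCombination R f (r j) = 0 :=
      hr.le (Submodule.subset_span ⟨j, rfl⟩)
    simp only [Fintype.linearCombination_apply, smul_eq_mul] at hj
    simp [piLinearCombination_apply, smul_smul, ← Finset.sum_smul, hj]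

theorem piLinearCombination_single [DecidableEq ι] [Fintype κ] [DecidableEq κ] (r : κ → ι → R)
    (i : ι) (e : E) :
    piLinearCombination E r (Pi.single i e) = ∑ j, Pi.single j (r j i • e) := by
  ext j
  simp [piLinearCombination_apply, Pi.single_apply]

theorem exists_eq_sum_smul_of_exact [Fintype κ] {f : ι → R} {r : κ → ι → R}
    (h : Function.Exact (LinearMap.pi fun i => f i • LinearMap.id : E →ₗ[R] ι → E)
      (piLinearCombination E r)) {x : ι → CharacterModule E} (hx : ∑ i, f i • x i = 0) :
    ∃ y : κ → CharacterModule E, ∀ i, x i = ∑ j, r j i • y j := by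
  classical
  let Φ : CharacterModule (ι → E) := ∑ i, CharacterModule.dual (LinearMap.proj (R := R) i) (x i)
  have hΦ (e : ι → E) : Φ e = ∑ i, x i (e i) := characterModule_sum_apply _ _
  obtain ⟨Ψ, hΨ⟩ := (exact_characterModule_dual h Φ).1 <| by
    ext e
    exact (hΦ _).trans ((characterModule_sum_apply _ _).symm.trans (DFunLike.congr_fun hx e))
  refine ⟨fun j => CharacterModule.dual (LinearMap.single R (fun _ => E) j) Ψ, fun i => ?_⟩
  ext e
  calc x i e = Φ (Pi.single i e) := by
        rw [hΦ, Finset.sum_eq_single i, Pi.single_eq_same]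
        · intro j _ hj
          rw [Pi.single_eq_of_ne hj, map_zero]
        · simp
    _ = Ψ (piLinearCombination E r (Pi.single i e)) := by rw [← hΨ]; rfl
    _ = ∑ j, Ψ (Pi.single j (r j i • e)) := by rw [piLinearCombination_single, map_sum]
    _ = _ := (characterModule_sum_apply
      (fun j => r j i • CharacterModule.dual (LinearMap.single R (fun _ => E) j) Ψ) e).symm

theorem characterModule_flat [IsCoherentRing R] [Module.Injective R E] :
    Module.Flat R (CharacterModule E) := by
  refine Module.Flat.of_forall_isTrivialRelation fun {l f x} hfx => ?_
  obtain ⟨k, r, hr⟩ := exists_span_eq_ker_linearCombination f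
  obtain ⟨y, hy⟩ := exists_eq_sum_smul_of_exact (exact_piLinearCombination_of_injective hr) hfx
  refine ⟨k, fun i j => r j i, y, hy, fun j => ?_⟩
  have hrj : r j ∈ LinearMap.ker (Fintype.linearCombination R f) :=
    hr ▸ Submodule.subset_span ⟨j, rfl⟩
  simpa [Fintype.linearCombination_apply, mul_comm] using hrj

theorem flat_characterEval_cokernel [IsCoherentRing R] (L : Type u) [AddCommGroup L] [Module R L]
    [Module.Flat R L] : Module.Flat R (CharacterModule (CharacterModule L) ⧸
      LinearMap.range (characterEval R L)) := by
  have := characterModule_injective (R := R) L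
  have := characterModule_flat (R := R) (E := CharacterModule L)
  exact flat_of_forall_torOneVanishes fun W => .of_lTensor_injective
    (.of_injective characterEval_injective) (lTensor_characterEval_injective W)

end Coherent

section Extensions

variable {R : Type u} [CommRing R]
variable {A A' B B' X : Type u} [AddCommGroup A] [Module R A] [AddCommGroup A'] [Module R A']
  [AddCommGroup B] [Module R B] [AddCommGroup B'] [Module R B'] [AddCommGroup X] [Module R X]

theorem IsFlatSyzygy.exists_characterModule_embedding [IsCoherentRing R]
    (h : IsFlatSyzygy R A A') :
    ∃ (E Q : ModuleCat.{u} R) (j : A →ₗ[R] CharacterModule E), Module.Injective R E ∧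
      Module.Flat R Q ∧ Function.Injective j ∧
        IsExtension R A' (CharacterModule E ⧸ LinearMap.range j) Q := by
  obtain ⟨F, _, hAF⟩ := h
  obtain ⟨j, hj, hj'⟩ := hAF.exists_cokernel_comp
    (IsShortExact.of_injective (characterEval_injective (R := R) (L := F))).isExtension
  exact ⟨.of R (CharacterModule F), .of R _, j, characterModule_injective F,
    flat_characterEval_cokernel F, hj, hj'⟩

theorem IsFlatSyzygy.ext [IsCoherentRing R] (h : IsExtension R A X B)
    (hB : IsInjectiveTorAcyclic R B) (hAA' : IsFlatSyzygy R A A') (hBB' : IsFlatSyzygy R B B') :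
    ∃ C Q Y : ModuleCat.{u} R, Module.Flat R Q ∧ IsExtension R A' C Q ∧ IsExtension R C Y B' ∧
      IsFlatSyzygy R X Y := by
  obtain ⟨i, p, hip⟩ := h
  obtain ⟨E, Q, j, _, hQ, hj, hA'Q⟩ := hAA'.exists_characterModule_embedding
  obtain ⟨F, _, f, g, hfg⟩ := hBB'
  obtain ⟨v, hv⟩ := (hB.torOneVanishes (W := E)).exists_extension hip j
  let D := CharacterModule E
  have : Module.Flat R D := characterModule_flat
  have hDF : IsShortExact (LinearMap.inl R D F) (LinearMap.snd R D F) := .inl_snd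
  let w : X →ₗ[R] D × F := v.prod (f ∘ₗ p)
  have hw : Function.Injective w := (injective_iff_map_eq_zero w).2 fun x hx => by
    obtain ⟨a, rfl⟩ := (hip.exact x).1 <| (injective_iff_map_eq_zero f).1 hfg.injective _
      (congrArg Prod.snd hx)
    have ha : j a = 0 := (LinearMap.congr_fun hv a).symm.trans (congrArg Prod.fst hx)
    rw [(injective_iff_map_eq_zero j).1 hj a ha, map_zero]
  have hwX := IsShortExact.of_injective hw
  refine ⟨.of R (D ⧸ LinearMap.range j), Q, .of R ((D × F) ⧸ LinearMap.range w), hQ, hA'Q, ?_,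
    .of R (D × F), hDF.isExtension.flat, hwX.isExtension⟩
  have hjw : LinearMap.inl R D F ∘ₗ j = w ∘ₗ i := by
    rw [← hv]
    ext x <;> simp [w, hip.exact.apply_apply_eq_zero]
  exact IsShortExact.cokernels hip.exact hip.surjective hDF (IsShortExact.of_injective hj).exact
    (Submodule.mkQ_surjective _) hwX.exact hwX.surjective hfg hjw rfl

variable (R) in
/-- The modules obtained from Gorenstein flat modules by iterated extensions. -/
inductive IsIteratedGorensteinFlatExtension : ModuleCat.{u} R → Prop
  | of_isGorensteinFlat (X : ModuleCat.{u} R) (hX : IsGorensteinFlat R X) :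
      IsIteratedGorensteinFlatExtension X
  | ext (A X B : ModuleCat.{u} R) (h : IsExtension R A X B)
      (hA : IsIteratedGorensteinFlatExtension A) (hB : IsIteratedGorensteinFlatExtension B) :
      IsIteratedGorensteinFlatExtension X

namespace IsIteratedGorensteinFlatExtension

variable {M : ModuleCat.{u} R}

theorem isInjectiveTorAcyclic (h : IsIteratedGorensteinFlatExtension R M) :
    IsInjectiveTorAcyclic R M := by
  induction h with
  | of_isGorensteinFlat X hX => exact hX.isInjectiveTorAcyclic
  | ext A X B h _ _ hA hB => exact .ext h hA hB

theorem exists_cosyzygy [IsCoherentRing R] (h : IsIteratedGorensteinFlatExtension R M) :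
    ∃ C : ModuleCat.{u} R, IsIteratedGorensteinFlatExtension R C ∧ IsFlatSyzygy R M C := by
  induction h with
  | of_isGorensteinFlat X hX =>
    obtain ⟨C, hC, hXC⟩ := hX.exists_cosyzygy
    exact ⟨C, .of_isGorensteinFlat C hC, hXC⟩
  | ext A X B h _ hB ihA ihB =>
    obtain ⟨A', hA', hAA'⟩ := ihA
    obtain ⟨B', hB', hBB'⟩ := ihB
    obtain ⟨C, Q, Y, _, hA'Q, hCB', hXY⟩ :=
      IsFlatSyzygy.ext h hB.isInjectiveTorAcyclic hAA' hBB'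
    exact ⟨Y, .ext C Y B' hCB' (.ext A' C Q hA'Q hA' (.of_isGorensteinFlat Q .of_flat)) hB', hXY⟩

end IsIteratedGorensteinFlatExtension

namespace IsGorensteinFlat

variable [IsCoherentRing R]

theorem ext (h : IsExtension R A X B) (hA : IsGorensteinFlat R A) (hB : IsGorensteinFlat R B) :
    IsGorensteinFlat R X :=
  of_class (IsIteratedGorensteinFlatExtension R) (fun _ h => h.isInjectiveTorAcyclic)
    (fun _ h => h.exists_cosyzygy) (X := .of R X) <|
    .ext (.of R A) _ (.of R B) h (.of_isGorensteinFlat _ hA) (.of_isGorensteinFlat _ hB)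

theorem ker (h : IsExtension R A X B) (hX : IsGorensteinFlat R X) (hB : IsGorensteinFlat R B) :
    IsGorensteinFlat R A := by
  obtain ⟨C, hC, F, hF, hXF⟩ := hX.exists_cosyzygy
  obtain ⟨f, hf, hBC⟩ := h.exists_cokernel_comp hXF
  exact .of_isFlatSyzygy (.ker h hX.isInjectiveTorAcyclic hB.isInjectiveTorAcyclic)
    ⟨F, hF, (IsShortExact.of_injective hf).isExtension⟩ (.ext hBC hB hC)

end IsGorensteinFlat

end Extensions

section Dimension

variable {R : Type u} [CommRing R]
variable {K M P : Type u} [AddCommGroup K] [Module R K] [AddCommGroup M] [Module R M]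
  [AddCommGroup P] [Module R P] {n : ℕ}

namespace GfdWitness

attribute [instance] acg mod

theorem isGorensteinFlat (w : GfdWitness R M 0) : IsGorensteinFlat R M := by
  have : Subsingleton (w.G (0 + 1)) := w.triv 1 zero_lt_one
  have hker : LinearMap.ker w.π = ⊥ := by
    rw [w.exact_zero, Subsingleton.elim (w.d 0) 0, LinearMap.range_zero]
  exact (w.gf 0 le_rfl).congr
    (LinearEquiv.ofBijective w.π ⟨LinearMap.ker_eq_bot.1 hker, w.π_surj⟩)

theorem nonempty_of_isGorensteinFlat (h : IsGorensteinFlat R M) : Nonempty (GfdWitness R M 0) := by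
  let s : ℕ → ModuleCat.{u} R
    | 0 => .of R M
    | _ + 1 => .of R PUnit
  have hs i : Subsingleton (s (i + 1)) := inferInstanceAs (Subsingleton PUnit)
  exact ⟨{
    G := fun i => s i
    gf := by rintro _ (_ | _); exact h
    triv := by rintro (_ | i) hi; exacts [absurd hi (lt_irrefl 0), hs i]
    π := (LinearMap.id : M →ₗ[R] M)
    π_surj := Function.surjective_id
    d := fun _ => 0
    exact_zero := LinearMap.ker_id.trans LinearMap.range_zero.symm
    exact := fun i => have := hs i; Subsingleton.elim _ _ }⟩

theorem nonempty_ker (w : GfdWitness R M (n + 1)) :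
    Nonempty (GfdWitness R (LinearMap.ker w.π) n) := by
  have hmem x : w.d 0 x ∈ LinearMap.ker w.π := w.exact_zero ▸ LinearMap.mem_range_self (w.d 0) x
  refine ⟨{
    G := fun i => w.G (i + 1)
    gf := fun i hi => w.gf (i + 1) (Nat.succ_le_succ hi)
    triv := fun i hi => w.triv (i + 1) (Nat.succ_lt_succ hi)
    π := (w.d 0).codRestrict _ hmem
    π_surj := ?_
    d := fun i => w.d (i + 1)
    exact_zero := (LinearMap.ker_codRestrict ..).trans (w.exact 0)
    exact := fun i => w.exact (i + 1) }⟩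
  rintro ⟨x, hx⟩
  obtain ⟨y, rfl⟩ := w.exact_zero.le hx
  exact ⟨y, rfl⟩

theorem nonempty_of_isExtension {G₀ : Type u} [AddCommGroup G₀] [Module R G₀]
    (h : IsExtension R K G₀ M) (hG₀ : IsGorensteinFlat R G₀) (w : GfdWitness R K n) :
    Nonempty (GfdWitness R M (n + 1)) := by
  obtain ⟨f, g, hfg⟩ := h
  let s : ℕ → ModuleCat.{u} R
    | 0 => .of R G₀
    | i + 1 => .of R (w.G i)
  refine ⟨{
    G := fun i => s i
    gf := by rintro (_ | i) hi; exacts [hG₀, w.gf i (Nat.le_of_succ_le_succ hi)]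
    triv := by
      rintro (_ | i) hi
      exacts [absurd hi (Nat.not_lt_zero _), w.triv i (Nat.lt_of_succ_lt_succ hi)]
    π := g
    π_surj := hfg.surjective
    d := fun
      | 0 => f ∘ₗ w.π
      | i + 1 => w.d i
    exact_zero := ?_
    exact := ?_ }⟩
  · exact (w.π_surj.comp_exact_iff_exact.2 hfg.exact).linearMap_ker_eq
  · rintro (_ | i)
    · exact (LinearMap.ker_comp_of_ker_eq_bot _ (LinearMap.ker_eq_bot.2 hfg.injective)).trans
        w.exact_zero
    · exact w.exact i

theorem nonempty_zero_iff : Nonempty (GfdWitness R M 0) ↔ IsGorensteinFlat R M :=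
  ⟨fun ⟨w⟩ => w.isGorensteinFlat, nonempty_of_isGorensteinFlat⟩

theorem nonempty_succ_iff : Nonempty (GfdWitness R M (n + 1)) ↔
    ∃ K G : ModuleCat.{u} R, IsExtension R K G M ∧ IsGorensteinFlat R G ∧
      Nonempty (GfdWitness R K n) := by
  refine ⟨fun ⟨w⟩ => ?_, fun ⟨K, G, h, hG, ⟨w⟩⟩ => nonempty_of_isExtension h hG w⟩
  exact ⟨.of R (LinearMap.ker w.π), .of R (w.G 0),
    (IsShortExact.of_surjective w.π_surj).isExtension, w.gf 0 (Nat.zero_le _), w.nonempty_ker⟩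

theorem nonempty_of_projective_presentation [IsCoherentRing R] [Module.Projective R P]
    (h : IsExtension R K P M) (w : Nonempty (GfdWitness R M (n + 1))) :
    Nonempty (GfdWitness R K n) := by
  obtain ⟨L, G, hLG, hG, hL⟩ := nonempty_succ_iff.1 w
  have hKG := hLG.schanuel h
  have prod_gf {X : Type u} [AddCommGroup X] [Module R X] (hX : IsGorensteinFlat R X) :
      IsGorensteinFlat R (X × P) :=
    .ext IsShortExact.inl_snd.isExtension hX .of_flat
  cases n with
  | zero => exact nonempty_zero_iff.2 (.ker hKG (prod_gf (nonempty_zero_iff.1 hL)) hG)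
  | succ n =>
    obtain ⟨L', G', hL', hG', hn⟩ := nonempty_succ_iff.1 hL
    obtain ⟨f, g, hfg⟩ := hL'.prod_right P
    obtain ⟨i, p, hip⟩ := hKG
    obtain ⟨a, c, -, hac⟩ := hfg.exists_kernel_comp hip
    have hpg : IsShortExact (LinearMap.ker (p ∘ₗ g)).subtype (p ∘ₗ g) :=
      .of_surjective (hip.surjective.comp hfg.surjective)
    have hker : IsGorensteinFlat R (LinearMap.ker (p ∘ₗ g)) := .ker hpg.isExtension (prod_gf hG') hG
    exact nonempty_succ_iff.2 ⟨L', .of R _, hac.isExtension, hker, hn⟩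

end GfdWitness

theorem gfd_le_gfd {S N : Type u} [CommRing S] [AddCommGroup N] [Module S N]
    (h : ∀ n, Nonempty (GfdWitness R M n) → Nonempty (GfdWitness S N n)) :
    gfd S N ≤ gfd R M :=
  sInf_le_sInf fun _ ⟨n, hn, w⟩ => ⟨n, hn, h n w⟩

end Dimension

section BaseChange

variable {R : Type u} (S : Type u) [CommRing R] [CommRing S] [Algebra R S]
variable {A B C K M X : Type u} [AddCommGroup A] [Module R A] [AddCommGroup B] [Module R B]
  [AddCommGroup C] [Module R C] [AddCommGroup K] [Module R K] [AddCommGroup M] [Module R M]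
  [AddCommGroup X] [Module R X]

section Flat

variable [Module.Flat R S]

theorem IsShortExact.baseChange {f : A →ₗ[R] B} {g : B →ₗ[R] C} (h : IsShortExact f g) :
    IsShortExact (f.baseChange S) (g.baseChange S) :=
  ⟨Module.Flat.lTensor_preserves_injective_linearMap f h.injective,
    lTensor_exact S h.exact h.surjective, LinearMap.lTensor_surjective S h.surjective⟩

theorem IsExtension.baseChange (h : IsExtension R A B C) :
    IsExtension S (S ⊗[R] A) (S ⊗[R] B) (S ⊗[R] C) := by
  obtain ⟨f, g, hfg⟩ := h
  exact (hfg.baseChange S).isExtension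

theorem IsFlatSyzygy.baseChange (h : IsFlatSyzygy R K X) :
    IsFlatSyzygy S (S ⊗[R] K) (S ⊗[R] X) := by
  obtain ⟨F, _, hF⟩ := h
  exact ⟨.of S (S ⊗[R] F), inferInstanceAs (Module.Flat S (S ⊗[R] F)), hF.baseChange S⟩

end Flat

section RestrictScalars

variable (E : Type u) [AddCommGroup E] [Module R E] [Module S E] [IsScalarTower R S E]

theorem lTensor_baseChange_injective_iff (f : A →ₗ[R] B) :
    Function.Injective ((f.baseChange S).lTensor E) ↔ Function.Injective (f.lTensor E) := by
  let eA := TensorProduct.AlgebraTensorModule.cancelBaseChange R S S E A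
  let eB := TensorProduct.AlgebraTensorModule.cancelBaseChange R S S E B
  have hcomm : eB ∘ (f.baseChange S).lTensor E = f.lTensor E ∘ eA := by
    refine funext fun x => ?_
    induction x with
    | zero => simp
    | add x y hx hy =>
      simp only [Function.comp_apply, map_add] at hx hy ⊢
      rw [hx, hy]
    | tmul a y =>
      induction y with
      | zero => simp
      | add x y hx hy =>
        simp only [Function.comp_apply, TensorProduct.tmul_add, map_add] at hx hy ⊢
        rw [hx, hy]
      | tmul s k => simp [eA, eB]
  rw [← eB.injective.of_comp_iff, hcomm, Function.Injective.of_comp_iff' _ eA.bijective]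

variable [Module.Flat R S]

theorem torOneVanishes_baseChange_iff :
    TorOneVanishes S E (S ⊗[R] X) ↔ TorOneVanishes R E X := by
  obtain ⟨P, K, f, g, _, hfg⟩ := exists_free_presentation R X
  exact ⟨fun h => .of_lTensor_injective hfg <|
      (lTensor_baseChange_injective_iff S E f).1 (h (hfg.baseChange S)),
    fun h => .of_lTensor_injective (hfg.baseChange S) <|
      (lTensor_baseChange_injective_iff S E f).2 (h hfg)⟩

theorem injective_of_flat_of_injective [Module.Injective S E] : Module.Injective R E := by
  refine ⟨fun X Y _ _ _ _ f hf g => ?_⟩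
  obtain ⟨k, hk⟩ := Module.Injective.out (f.baseChange S)
    (Module.Flat.lTensor_preserves_injective_linearMap f hf) (g.liftBaseChange S)
  exact ⟨k.restrictScalars R ∘ₗ TensorProduct.mk R S Y 1, fun x => by simpa using hk (1 ⊗ₜ x)⟩

end RestrictScalars

theorem IsGorensteinFlat.baseChange [Module.Flat R S] (h : IsGorensteinFlat R X) :
    IsGorensteinFlat S (S ⊗[R] X) := by
  obtain ⟨Z, hZ, ⟨e⟩⟩ := h.exists_isCompleteSyzygySequence
  refine IsCompleteSyzygySequence.isGorensteinFlat (Z := fun i => .of S (S ⊗[R] Z i))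
    ⟨fun i => (hZ.isFlatSyzygy i).baseChange S, fun i E hE => ?_⟩ (e.baseChange R S _ _)
  let _ : Module R E := Module.compHom E (algebraMap R S)
  have : IsScalarTower R S E := .of_algebraMap_smul fun _ _ => rfl
  exact (torOneVanishes_baseChange_iff S E).2
    (hZ.torOneVanishes i (.of R E) (injective_of_flat_of_injective S E))

theorem GfdWitness.nonempty_baseChange [Module.Flat R S] {n : ℕ}
    (h : Nonempty (GfdWitness R X n)) : Nonempty (GfdWitness S (S ⊗[R] X) n) := by
  induction n generalizing X with
  | zero => exact nonempty_zero_iff.2 ((nonempty_zero_iff.1 h).baseChange S)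
  | succ n ih =>
    obtain ⟨K, G, hKG, hG, hK⟩ := nonempty_succ_iff.1 h
    exact nonempty_succ_iff.2
      ⟨.of S (S ⊗[R] K), .of S (S ⊗[R] G), hKG.baseChange S, hG.baseChange S, ih hK⟩

theorem gfd_baseChange_le [Module.Flat R S] : gfd S (S ⊗[R] M) ≤ gfd R M :=
  gfd_le_gfd fun _ => GfdWitness.nonempty_baseChange S

end BaseChange

section Descent

theorem TorOneVanishes.of_retract {R : Type u} [CommRing R] {E E' X : Type u} [AddCommGroup E]
    [Module R E] [AddCommGroup E'] [Module R E'] [AddCommGroup X] [Module R X] {i : E →ₗ[R] E'}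
    {r : E' →ₗ[R] E} (hri : r ∘ₗ i = LinearMap.id) (h : TorOneVanishes R E' X) :
    TorOneVanishes R E X := by
  intro A B _ _ _ _ f g hfg
  have hi : Function.Injective (i.rTensor A) :=
    Function.LeftInverse.injective (g := r.rTensor A) fun x => by
      rw [← LinearMap.comp_apply, ← LinearMap.rTensor_comp, hri, LinearMap.rTensor_id_apply]
  refine .of_comp (f := i.rTensor B) ?_
  rw [show i.rTensor B ∘ f.lTensor E = f.lTensor E' ∘ i.rTensor A from
    funext (rTensor_lTensor_apply i f)]
  exact (h hfg).comp hi

theorem IsExtension.flat_ker {R : Type u} [CommRing R] {A X B : Type u} [AddCommGroup A]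
    [Module R A] [AddCommGroup X] [Module R X] [AddCommGroup B] [Module R B]
    (h : IsExtension R A X B) [Module.Flat R X] [Module.Flat R B] : Module.Flat R A :=
  flat_of_forall_torOneVanishes fun W =>
    let ⟨_, hW⟩ := exists_isFlatSyzygy R W
    .ker h hW .of_flat_right .of_flat_right

variable {R : Type u} (S : Type u) [CommRing R] [CommRing S] [Algebra R S]
  [Module.FaithfullyFlat R S]
variable {M X : Type u} [AddCommGroup M] [Module R M] [AddCommGroup X] [Module R X]

theorem TorOneVanishes.of_baseChange (h : IsInjectiveTorAcyclic S (S ⊗[R] X)) (E : Type u)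
    [AddCommGroup E] [Module R E] [Module.Injective R E] : TorOneVanishes R E X := by
  obtain ⟨⟨E', _, j, _⟩⟩ := EnoughInjectives.presentation (ModuleCat.of S (S ⊗[R] E))
  have : Module.Injective S E' := Module.injective_module_of_injective_object S E'
  let _ : Module R E' := Module.compHom E' (algebraMap R S)
  have : IsScalarTower R S E' := .of_algebraMap_smul fun _ _ => rfl
  let j' : S ⊗[R] E →ₗ[S] E' := j.hom
  let i : E →ₗ[R] E' := j'.restrictScalars R ∘ₗ TensorProduct.mk R S E 1
  have hi : Function.Injective i := ((ModuleCat.mono_iff_injective j).1 inferInstance).comp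
    (Module.FaithfullyFlat.tensorProduct_mk_injective E)
  obtain ⟨r, hr⟩ := Module.Injective.out i hi LinearMap.id
  exact .of_retract (LinearMap.ext hr) ((torOneVanishes_baseChange_iff S E').1 h.torOneVanishes)

theorem IsInjectiveTorAcyclic.of_baseChange (h : IsInjectiveTorAcyclic S (S ⊗[R] X)) :
    IsInjectiveTorAcyclic R X := by
  refine of_class (fun Y => IsInjectiveTorAcyclic S (S ⊗[R] Y))
    (fun Y hY E _ => .of_baseChange S hY E) (fun Y hY => ?_) (X := .of R X) h
  obtain ⟨K, F, hF, hKF⟩ := exists_isFlatSyzygy R Y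
  exact ⟨K, .ker (hKF.baseChange S) .of_flat hY, F, hF, hKF⟩

theorem exists_isExtension_baseChange {F C' : Type u} [AddCommGroup F] [Module S F]
    [Module.Flat S F] [AddCommGroup C'] [Module S C'] (h : IsExtension S (S ⊗[R] X) F C') :
    ∃ (C : ModuleCat.{u} R) (L : ModuleCat.{u} S),
      IsFlatSyzygy R X C ∧ Module.Flat S L ∧ IsExtension S L (S ⊗[R] C) C' := by
  obtain ⟨j, p, hjp⟩ := h
  let _ : Module R F := Module.compHom F (algebraMap R S)
  have : IsScalarTower R S F := .of_algebraMap_smul fun _ _ => rfl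
  let i : X →ₗ[R] F := j.restrictScalars R ∘ₗ TensorProduct.mk R S X 1
  have hi : IsShortExact i (LinearMap.range i).mkQ := .of_injective <|
    hjp.injective.comp (Module.FaithfullyFlat.tensorProduct_mk_injective X)
  let m : S ⊗[R] F →ₗ[S] F := (LinearMap.id : F →ₗ[R] F).liftBaseChange S
  have hm : Function.Surjective m := fun x => ⟨1 ⊗ₜ x, by simp [m]⟩
  have hkm := IsShortExact.of_surjective hm
  have hmi : m ∘ₗ i.baseChange S = j := by
    ext x
    simp [m, i]
  have : Module.Flat R F := .trans R S F
  refine ⟨.of R (F ⧸ LinearMap.range i), .of S (LinearMap.ker m),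
    ⟨.of R F, this, hi.isExtension⟩, hkm.isExtension.flat_ker, ?_⟩
  exact IsShortExact.cokernels (i₁ := (0 : PUnit →ₗ[S] S ⊗[R] X)) (p₁ := LinearMap.id)
    (α := 0) (a := LinearMap.id) ((LinearMap.exact_zero_iff_injective _ _).2 Function.injective_id)
    Function.surjective_id hkm ((LinearMap.exact_zero_iff_injective _ _).2 Function.injective_id)
    Function.surjective_id (hi.baseChange S).exact (hi.baseChange S).surjective hjp (by simp) hmi

namespace IsGorensteinFlat

variable [IsCoherentRing S]

theorem exists_cosyzygy_of_baseChange (h : IsGorensteinFlat S (S ⊗[R] X)) :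
    ∃ C : ModuleCat.{u} R, IsGorensteinFlat S (S ⊗[R] C) ∧ IsFlatSyzygy R X C := by
  obtain ⟨C', hC', F, _, hF⟩ := h.exists_cosyzygy
  obtain ⟨C, L, hXC, _, hL⟩ := exists_isExtension_baseChange S hF
  exact ⟨C, .ext hL .of_flat hC', hXC⟩

theorem of_baseChange (h : IsGorensteinFlat S (S ⊗[R] X)) : IsGorensteinFlat R X :=
  of_class (fun Y => IsGorensteinFlat S (S ⊗[R] Y))
    (fun _ hY => .of_baseChange S hY.isInjectiveTorAcyclic)
    (fun _ hY => hY.exists_cosyzygy_of_baseChange) (X := .of R X) h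

end IsGorensteinFlat

theorem GfdWitness.nonempty_of_baseChange [IsCoherentRing S] {n : ℕ}
    (h : Nonempty (GfdWitness S (S ⊗[R] X) n)) : Nonempty (GfdWitness R X n) := by
  induction n generalizing X with
  | zero => exact nonempty_zero_iff.2 ((nonempty_zero_iff.1 h).of_baseChange S)
  | succ n ih =>
    obtain ⟨P, K, f, g, _, hfg⟩ := exists_free_presentation R X
    exact nonempty_succ_iff.2 ⟨K, P, hfg.isExtension, .of_flat,
      ih (nonempty_of_projective_presentation (hfg.isExtension.baseChange S) h)⟩

theorem gfd_le_gfd_baseChange [IsCoherentRing S] : gfd R M ≤ gfd S (S ⊗[R] M) :=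
  gfd_le_gfd fun _ => GfdWitness.nonempty_of_baseChange S

end Descent

theorem gfd_baseChange_le_and_eq_of_faithfullyFlat_general
    (R S : Type u) [CommRing R] [CommRing S] [Algebra R S] [Module.Flat R S]
    (M : Type u) [AddCommGroup M] [Module R M] :
    gfd S (S ⊗[R] M) ≤ gfd R M ∧
      (IsCoherentRing S → Module.FaithfullyFlat R S →
        gfd S (S ⊗[R] M) = gfd R M ∧ (gfd R M < ⊤ ↔ gfd S (S ⊗[R] M) < ⊤)) := by
  refine ⟨gfd_baseChange_le S, fun _ _ => ?_⟩
  have heq : gfd S (S ⊗[R] M) = gfd R M := (gfd_baseChange_le S).antisymm (gfd_le_gfd_baseChange S)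
  exact ⟨heq, by rw [heq]⟩

theorem gfd_baseChange_le_and_eq_of_faithfullyFlat
    (R S : Type u) [CommRing R] [CommRing S] [IsNoetherianRing R] [IsNoetherianRing S]
    [Algebra R S] [Module.Flat R S]
    (M : Type u) [AddCommGroup M] [Module R M] :
    gfd S (S ⊗[R] M) ≤ gfd R M ∧
      (Module.FaithfullyFlat R S →
        gfd S (S ⊗[R] M) = gfd R M ∧ (gfd R M < ⊤ ↔ gfd S (S ⊗[R] M) < ⊤)) :=
  have h := gfd_baseChange_le_and_eq_of_faithfullyFlat_general R S M
  ⟨h.1, h.2 inferInstance⟩
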